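/- Let f* : C → D be a symmetric monoidal functor between closed symmetric monoidal categories, with adjunctions f* ⊣ f_* ⊣ f^!. For every dualizable object M ∈ C and every X ∈ D, the canonical morphism f*(M) ⊗ f^!(X) → f^!(M ⊗ X) is an isomorphism. -/

import Mathlib

/-!
STATEMENT 4: Let f* : C → D be a symmetric monoidal functor between closed symmetric monoidal
categories, with adjunctions f* ⊣ f_* ⊣ f^!.  For every dualizable object M ∈ C and every
object X, the canonical morphism f*(M) ⊗ f^!(X) → f^!(M ⊗ X) is an isomorphism.  The morphism
is adjoint (under f_* ⊣ f^!) to the composite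
  f_*(f*M ⊗ f^!X) ≅ M ⊗ f_*f^!X → M ⊗ X,
where the first isomorphism is the inverse of the projection formula morphism `projMap`
(an isomorphism since M is dualizable) and the second map uses the counit of f_* ⊣ f^!.
-/

open CategoryTheory CategoryTheory.MonoidalCategory

universe v u

/-- The canonical projection morphism `M ⊗ f_*(Z) → f_*(f*(M) ⊗ Z)`. -/
def projMap {C D : Type u} [Category.{v} C] [Category.{v} D]
    [MonoidalCategory C] [MonoidalCategory D]
    (fstar : C ⥤ D) [fstar.Monoidal] (fpush : D ⥤ C) (adj : fstar ⊣ fpush)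
    (M : C) (Z : D) :
    M ⊗ fpush.obj Z ⟶ fpush.obj (fstar.obj M ⊗ Z) :=
  adj.unit.app (M ⊗ fpush.obj Z) ≫
    fpush.map (Functor.OplaxMonoidal.δ fstar M (fpush.obj Z) ≫
      (fstar.obj M ◁ adj.counit.app Z))

section Helpers

open Functor.OplaxMonoidal Functor.LaxMonoidal

variable {C D : Type u} [Category.{v} C] [Category.{v} D]
    [MonoidalCategory C] [MonoidalCategory D]
    (fstar : C ⥤ D) [fstar.Monoidal] (fpush : D ⥤ C) (adj : fstar ⊣ fpush)

theorem projMap_spec (M : C) (Z : D) :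
    fstar.map (projMap fstar fpush adj M Z) ≫ adj.counit.app _ =
      δ fstar M (fpush.obj Z) ≫ fstar.obj M ◁ adj.counit.app Z := by
  simp [projMap]

theorem hom_ext_counit {X : C} {Y : D} {a b : X ⟶ fpush.obj Y}
    (h : fstar.map a ≫ adj.counit.app Y = fstar.map b ≫ adj.counit.app Y) : a = b := by
  apply (adj.homEquiv _ _).symm.injective
  simpa [Adjunction.homEquiv_counit] using h

theorem counit_nat {X Y : D} (g : X ⟶ Y) :
    fstar.map (fpush.map g) ≫ adj.counit.app Y = adj.counit.app X ≫ g :=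
  adj.counit.naturality g

theorem counit_nat_assoc {X Y W : D} (g : X ⟶ Y) (k : Y ⟶ W) :
    fstar.map (fpush.map g) ≫ adj.counit.app Y ≫ k = adj.counit.app X ≫ g ≫ k := by
  rw [← Category.assoc, counit_nat, Category.assoc]

theorem counit_exchange {A B : D} (f : A ⟶ B) (Z : D) :
    A ◁ adj.counit.app Z ≫ f ▷ Z = f ▷ fstar.obj (fpush.obj Z) ≫ B ◁ adj.counit.app Z :=
  whisker_exchange f (adj.counit.app Z)

theorem counit_exchange_assoc {A B W : D} (f : A ⟶ B) (Z : D) (k : B ⊗ Z ⟶ W) :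
    A ◁ adj.counit.app Z ≫ f ▷ Z ≫ k =
      f ▷ fstar.obj (fpush.obj Z) ≫ B ◁ adj.counit.app Z ≫ k := by
  rw [← Category.assoc, counit_exchange, Category.assoc]

theorem counit_leftUnitor (Z : D) :
    𝟙_ D ◁ adj.counit.app Z ≫ (λ_ Z).hom =
      (λ_ (fstar.obj (fpush.obj Z))).hom ≫ adj.counit.app Z :=
  leftUnitor_naturality (adj.counit.app Z)

theorem counit_associator (A B Z : D) :
    (A ⊗ B) ◁ adj.counit.app Z ≫ (α_ A B Z).hom =
      (α_ A B (fstar.obj (fpush.obj Z))).hom ≫ A ◁ B ◁ adj.counit.app Z :=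
  associator_naturality_right A B (adj.counit.app Z)

theorem projMap_natural_right (M : C) {Z Z' : D} (h : Z ⟶ Z') :
    M ◁ fpush.map h ≫ projMap fstar fpush adj M Z' =
      projMap fstar fpush adj M Z ≫ fpush.map (fstar.obj M ◁ h) := by
  apply hom_ext_counit fstar fpush adj
  simp only [Functor.map_comp, Category.assoc, counit_nat, projMap_spec]
  rw [← Category.assoc (fstar.map (projMap fstar fpush adj M Z)), projMap_spec,
    ← δ_natural_right_assoc, Category.assoc, ← whiskerLeft_comp, ← whiskerLeft_comp,
    counit_nat]

theorem projMap_natural_left {M M' : C} (a : M ⟶ M') (Z : D) :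
    a ▷ fpush.obj Z ≫ projMap fstar fpush adj M' Z =
      projMap fstar fpush adj M Z ≫ fpush.map (fstar.map a ▷ Z) := by
  apply hom_ext_counit fstar fpush adj
  simp only [Functor.map_comp, Category.assoc, counit_nat, projMap_spec]
  rw [← Category.assoc (fstar.map (projMap fstar fpush adj M Z)), projMap_spec,
    ← δ_natural_left_assoc, Category.assoc, counit_exchange]

theorem projMap_unit (Z : D) :
    projMap fstar fpush adj (𝟙_ C) Z ≫ fpush.map (η fstar ▷ Z ≫ (λ_ Z).hom) =
      (λ_ (fpush.obj Z)).hom := by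
  apply hom_ext_counit fstar fpush adj
  simp only [Functor.map_comp, Category.assoc, counit_nat,
    counit_nat_assoc]
  rw [← Category.assoc (fstar.map (projMap fstar fpush adj _ Z)), projMap_spec,
    ← left_unitality_hom]
  simp only [Category.assoc]
  rw [counit_exchange_assoc]
  exact congrArg (fun k => _ ≫ _ ≫ k) (counit_leftUnitor fstar fpush adj Z)

theorem projMap_tensor (M N : C) (Z : D) :
    M ◁ projMap fstar fpush adj N Z ≫ projMap fstar fpush adj M (fstar.obj N ⊗ Z) =
      (α_ M N (fpush.obj Z)).inv ≫ projMap fstar fpush adj (M ⊗ N) Z ≫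
        fpush.map (δ fstar M N ▷ Z ≫ (α_ _ _ _).hom) := by
  apply hom_ext_counit fstar fpush adj
  simp only [Functor.map_comp, Category.assoc, counit_nat,
    counit_nat_assoc, projMap_spec]
  rw [← Category.assoc (fstar.map (projMap fstar fpush adj (M ⊗ N) Z)), projMap_spec,
    ← δ_natural_right_assoc, ← whiskerLeft_comp, projMap_spec, whiskerLeft_comp,
    δ_comp_whiskerLeft_δ_assoc]
  simp only [Category.assoc]
  rw [counit_exchange_assoc, counit_associator]

/-- The image of an exact pairing under a monoidal functor. -/
@[reducible]
def mapPairing (M N : C) [ExactPairing M N] : ExactPairing (fstar.obj M) (fstar.obj N) where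
  coevaluation' := ε fstar ≫ fstar.map (η_ M N) ≫ δ fstar M N
  evaluation' := μ fstar N M ≫ fstar.map (ε_ M N) ≫ η fstar
  coevaluation_evaluation' := by
    have := congrArg fstar.map (ExactPairing.coevaluation_evaluation M N)
    simp only [Functor.map_comp, Functor.Monoidal.map_whiskerLeft,
      Functor.Monoidal.map_whiskerRight, Functor.Monoidal.map_associator_inv,
      Functor.Monoidal.map_rightUnitor, Functor.Monoidal.map_leftUnitor_inv] at this
    simp only [Category.assoc, Functor.Monoidal.μ_δ_assoc, Functor.Monoidal.whiskerRight_μ_δ_assoc] at this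
    rw [← cancel_epi (δ fstar N (𝟙_ C) ≫ fstar.obj N ◁ η fstar),
      ← cancel_mono (ε fstar ▷ fstar.obj N ≫ μ fstar (𝟙_ C) N)]
    simpa using this
  evaluation_coevaluation' := by
    have := congrArg fstar.map (ExactPairing.evaluation_coevaluation M N)
    simp only [Functor.map_comp, Functor.Monoidal.map_whiskerLeft,
      Functor.Monoidal.map_whiskerRight, Functor.Monoidal.map_associator,
      Functor.Monoidal.map_leftUnitor, Functor.Monoidal.map_rightUnitor_inv] at this
    simp only [Category.assoc, Functor.Monoidal.μ_δ_assoc, Functor.Monoidal.whiskerLeft_μ_δ_assoc] at this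
    rw [← cancel_epi (δ fstar (𝟙_ C) M ≫ η fstar ▷ fstar.obj M),
      ← cancel_mono (fstar.obj M ◁ ε fstar ≫ μ fstar M (𝟙_ C))]
    simpa using this

theorem projMap_coev (M N : C) [ExactPairing M N] (Z : D) :
    (λ_ (fpush.obj Z)).inv ≫ η_ M N ▷ _ ≫ (α_ _ _ _).hom ≫
      M ◁ projMap fstar fpush adj N Z ≫ projMap fstar fpush adj M (fstar.obj N ⊗ Z) =
    fpush.map ((λ_ Z).inv ≫ (ε fstar ≫ fstar.map (η_ M N) ≫ δ fstar M N) ▷ Z ≫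
      (α_ _ _ _).hom) := by
  rw [projMap_tensor, Iso.hom_inv_id_assoc, ← Category.assoc (η_ M N ▷ _), projMap_natural_left,
    Iso.inv_comp_eq, ← projMap_unit fstar fpush adj]
  simp only [Category.assoc, ← Functor.map_comp]
  simp

theorem projMap_ev (M N : C) [ExactPairing M N] (Z : D) :
    N ◁ projMap fstar fpush adj M Z ≫ projMap fstar fpush adj N (fstar.obj M ⊗ Z) ≫
      fpush.map ((α_ _ _ _).inv ≫ (μ fstar N M ≫ fstar.map (ε_ M N) ≫ η fstar) ▷ Z ≫
        (λ_ Z).hom) =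
    (α_ _ _ _).inv ≫ ε_ M N ▷ _ ≫ (λ_ (fpush.obj Z)).hom := by
  rw [← Category.assoc, projMap_tensor, ← projMap_unit fstar fpush adj,
    ← Category.assoc (ε_ M N ▷ _), projMap_natural_left]
  simp only [Category.assoc, ← Functor.map_comp]
  simp

theorem projMap_isIso (M N : C) [ExactPairing M N] (Z : D) :
    IsIso (projMap fstar fpush adj M Z) := by
  letI := mapPairing fstar M N
  let ev' : fstar.obj N ⊗ (fstar.obj M ⊗ Z) ⟶ Z :=
    (α_ _ _ _).inv ≫ (μ fstar N M ≫ fstar.map (ε_ M N) ≫ η fstar) ▷ Z ≫ (λ_ Z).hom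
  have hev' : ev' = (tensorLeftHomEquiv (fstar.obj M ⊗ Z) (fstar.obj M) (fstar.obj N) Z).symm
      (𝟙 _) := by
    simp only [tensorLeftHomEquiv, Equiv.coe_fn_symm_mk, whiskerLeft_id, Category.id_comp]
    rfl
  have h1 := projMap_ev fstar fpush adj M N Z
  change _ ≫ _ ≫ fpush.map ev' = _ at h1
  refine ⟨tensorLeftHomEquiv _ M N _
    (projMap fstar fpush adj N (fstar.obj M ⊗ Z) ≫ fpush.map ev'), ?_, ?_⟩
  · apply (tensorLeftHomEquiv _ M N _).symm.injective
    rw [tensorLeftHomEquiv_symm_naturality, Equiv.symm_apply_apply, h1]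
    simp [tensorLeftHomEquiv]
  · have h2 := projMap_coev fstar fpush adj M N (fstar.obj M ⊗ Z)
    have h3 := (tensorLeftHomEquiv (fstar.obj M ⊗ Z) (fstar.obj M) (fstar.obj N) Z).apply_symm_apply
      (𝟙 _)
    rw [← hev'] at h3
    rw [← fpush.map_id, ← h3]
    change (_ ≫ _ ≫ _ ≫ _) ≫ _ = fpush.map (_ ≫ (ε fstar ≫ fstar.map (η_ M N) ≫ δ fstar M N) ▷ _ ≫ _ ≫ _)
    simp only [whiskerLeft_comp, Category.assoc, projMap_natural_right]
    rw [reassoc_of% h2, ← Functor.map_comp]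
    simp only [Category.assoc]

end Helpers

theorem stmt_4 {C D : Type u} [Category.{v} C] [Category.{v} D]
    [MonoidalCategory C] [MonoidalCategory D]
    [SymmetricCategory C] [SymmetricCategory D]
    [MonoidalClosed C] [MonoidalClosed D]
    (fstar : C ⥤ D) [fstar.Monoidal]
    (fpush : D ⥤ C) (adj : fstar ⊣ fpush)
    (fexc : C ⥤ D) (adj' : fpush ⊣ fexc)
    (M : C) [HasRightDual M]
    [∀ Z : D, IsIso (projMap fstar fpush adj M Z)]
    (X : C) :
    IsIso ((adj'.homEquiv (fstar.obj M ⊗ fexc.obj X) (M ⊗ X))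
      (inv (projMap fstar fpush adj M (fexc.obj X)) ≫ (M ◁ adj'.counit.app X))) := by
  letI := mapPairing fstar M Mᘁ
  letI : ExactPairing Mᘁ M := BraidedCategory.exactPairing_swap M Mᘁ
  haveI hN : ∀ Z, IsIso (projMap fstar fpush adj Mᘁ Z) := projMap_isIso fstar fpush adj Mᘁ M
  rw [isIso_iff_yoneda_map_bijective]
  intro Z
  let e : (Z ⟶ fstar.obj M ⊗ fexc.obj X) ≃ (Z ⟶ fexc.obj (M ⊗ X)) :=
    (tensorLeftHomEquiv Z (fstar.obj M) (fstar.obj Mᘁ) (fexc.obj X)).symm.trans <|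
    (adj'.homEquiv _ _).symm.trans <|
    ((asIso (projMap fstar fpush adj Mᘁ Z)).homFromEquiv (Z := X)).symm.trans <|
    (tensorLeftHomEquiv (fpush.obj Z) M Mᘁ X).trans (adj'.homEquiv _ _)
  convert! e.bijective using 1
  funext g
  obtain ⟨h, rfl⟩ := (tensorLeftHomEquiv Z (fstar.obj M) (fstar.obj Mᘁ) (fexc.obj X)).surjective g
  rw [← adj'.homEquiv_naturality_left]
  simp only [e, Equiv.trans_apply, Equiv.symm_apply_apply]
  congr 1
  have h2 := projMap_coev fstar fpush adj M Mᘁ Z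
  change fpush.map (_ ≫ (Functor.LaxMonoidal.ε fstar ≫ fstar.map (η_ M Mᘁ) ≫
    Functor.OplaxMonoidal.δ fstar M Mᘁ) ▷ _ ≫ _ ≫ _) ≫ _ =
    _ ≫ _ ≫ _ ≫ M ◁ (projMap fstar fpush adj Mᘁ Z ≫ _)
  rw [Adjunction.homEquiv_counit]
  have h4 : fpush.map ((λ_ Z).inv ≫ (Functor.LaxMonoidal.ε fstar ≫ fstar.map (η_ M Mᘁ) ≫
    Functor.OplaxMonoidal.δ fstar M Mᘁ) ▷ Z ≫ (α_ _ _ _).hom ≫ fstar.obj M ◁ h) =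
    ((λ_ (fpush.obj Z)).inv ≫ η_ M Mᘁ ▷ _ ≫ (α_ _ _ _).hom ≫
      M ◁ (projMap fstar fpush adj Mᘁ Z ≫ fpush.map h)) ≫
      projMap fstar fpush adj M (fexc.obj X) := by
    simp only [whiskerLeft_comp, Category.assoc, projMap_natural_right]
    rw [reassoc_of% h2, ← Functor.map_comp]
    simp only [Category.assoc]
  rw [h4]
  simp
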